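/- arXiv:2506.09752 — 2 statements merged into one kernel-verified Lean document; each statement's English description precedes it below -/
import Mathlib

section
/- (General lower bound for the Bopp–Podolsky energy, arbitrary parameter a.) Let a > 0 and define K_a : ℝ³ → ℝ by K_a(x) = (1 - exp(-‖x‖/a))/‖x‖ for x ≠ 0 and K_a(0) = 1/a, and set V_a(f,g) = ∫_{ℝ³}∫_{ℝ³} K_a(x-y) f(x) g(y) dx dy. Given α > 1/2, there exists a constant C = C(a, α) > 0 such that for every measurable u : ℝ³ → ℝ, V_a(u², u²) ≥ C · ( ∫_{ℝ³} u(x)² / ( (1+‖x‖²)^{1/4} (1+|log ‖x‖|)^α ) dx )², where the inequality is understood in the extended nonnegative reals [0,∞]. -/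
open MeasureTheory Real
open scoped ENNReal Classical

noncomputable section

abbrev E3 := EuclideanSpace ℝ (Fin 3)

/-- Bopp–Podolsky kernel with parameter `a`. -/
def Ka (a : ℝ) (x : E3) : ℝ := if x = 0 then 1 / a else (1 - Real.exp (-‖x‖ / a)) / ‖x‖

/-- Bopp–Podolsky energy with parameter `a`, as an iterated lower integral in `[0,∞]`. -/
def Vlina (a : ℝ) (f g : E3 → ℝ) : ℝ≥0∞ :=
  ∫⁻ x, ∫⁻ y, ENNReal.ofReal (Ka a (x - y) * f x * g y)

/-- Index of the exponential annulus containing `x`. -/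
def annIdx (x : E3) : ℕ := ⌊Real.log (1 + ‖x‖)⌋₊

lemma annIdx_measurable : Measurable annIdx := by
  unfold annIdx
  exact Nat.measurable_floor.comp (Real.measurable_log.comp (measurable_const.add measurable_norm))

lemma annIdx_le (x : E3) : (annIdx x : ℝ) ≤ Real.log (1 + ‖x‖) :=
  Nat.floor_le (Real.log_nonneg (by linarith [norm_nonneg x]))

lemma annIdx_lt (x : E3) : Real.log (1 + ‖x‖) < annIdx x + 1 := Nat.lt_floor_add_one _

lemma exp_annIdx_le (x : E3) : Real.exp (annIdx x) ≤ 1 + ‖x‖ := by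
  rw [← Real.le_log_iff_exp_le (by positivity)]
  exact annIdx_le x

lemma norm_lt_annIdx (x : E3) : ‖x‖ ≤ Real.exp (annIdx x) * Real.exp 1 := by
  have h := annIdx_lt x
  rw [Real.log_lt_iff_lt_exp (by positivity), Real.exp_add] at h
  linarith

lemma Ka_lower (a : ℝ) (ha : 0 < a) (x : E3) : 1 / (a + ‖x‖) ≤ Ka a x := by
  unfold Ka
  split_ifs with h
  · simp [h]
  · have hx : 0 < ‖x‖ := norm_pos_iff.mpr h
    have h1 : Real.exp (-‖x‖ / a) ≤ a / (a + ‖x‖) := by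
      rw [neg_div, Real.exp_neg]
      have h2 := Real.add_one_le_exp (‖x‖ / a)
      have h3 : (a / (a + ‖x‖)) = (‖x‖ / a + 1)⁻¹ := by
        field_simp
        ring
      rw [h3]
      exact inv_anti₀ (by positivity) h2
    rw [le_div_iff₀ hx]
    have h4 : 1 / (a + ‖x‖) * ‖x‖ = 1 - a / (a + ‖x‖) := by
      field_simp
      ring
    linarith

lemma Ka_block (a : ℝ) (ha : 0 < a) (n : ℕ) (x y : E3) (hx : annIdx x = n) (hy : annIdx y = n) :
    1 / (a + 2 * Real.exp 1) * (Real.exp (-(n : ℝ) / 2)) ^ 2 ≤ Ka a (x - y) := by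
  refine le_trans ?_ (Ka_lower a ha _)
  have h1 := norm_lt_annIdx x
  have h2 := norm_lt_annIdx y
  rw [hx] at h1
  rw [hy] at h2
  have h3 := norm_sub_le x y
  have h4 : (Real.exp (-(n : ℝ) / 2)) ^ 2 = 1 / Real.exp n := by
    rw [← Real.exp_nat_mul, one_div, ← Real.exp_neg]
    congr 1
    push_cast
    ring
  rw [h4, one_div_mul_one_div]
  have h5 : 1 ≤ Real.exp (n : ℝ) := Real.one_le_exp (by positivity)
  apply one_div_le_one_div_of_le (by positivity)
  nlinarith

lemma weight_bound (α : ℝ) (hα : 1 / 2 < α) (x : E3) :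
    1 / (((1 : ℝ) + ‖x‖ ^ 2) ^ ((1 : ℝ) / 4) * (1 + |Real.log ‖x‖|) ^ α) ≤
      (2 ^ ((1 : ℝ) / 4) * 2 ^ α) *
        (((1 + (annIdx x : ℝ)) ^ (-α)) * Real.exp (-(annIdx x : ℝ) / 2)) := by
  have hr := norm_nonneg x
  set n : ℝ := (annIdx x : ℝ) with hn
  have hn0 : 0 ≤ n := by positivity
  have e1 : Real.exp (n / 2) ≤ 2 ^ ((1 : ℝ) / 4) * ((1 : ℝ) + ‖x‖ ^ 2) ^ ((1 : ℝ) / 4) := by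
    rw [← Real.mul_rpow (by norm_num) (by positivity)]
    have : Real.exp (n / 2) = (Real.exp n ^ 2) ^ ((1 : ℝ) / 4) := by
      rw [← Real.exp_nat_mul, ← Real.exp_mul]
      congr 1
      push_cast
      ring
    rw [this]
    apply Real.rpow_le_rpow (by positivity) _ (by norm_num)
    have h := exp_annIdx_le x
    have h0 := Real.exp_pos n
    nlinarith [sq_nonneg (1 - ‖x‖)]
  have e2 : (1 + n) ^ α ≤ 2 ^ α * (1 + |Real.log ‖x‖|) ^ α := by
    rw [← Real.mul_rpow (by norm_num) (by positivity)]
    apply Real.rpow_le_rpow (by positivity) _ (by linarith)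
    have h := annIdx_le x
    have habs := abs_nonneg (Real.log ‖x‖)
    rcases le_or_gt 1 ‖x‖ with h1 | h1
    · have : Real.log (1 + ‖x‖) ≤ Real.log (2 * ‖x‖) :=
        Real.log_le_log (by positivity) (by linarith)
      rw [Real.log_mul (by norm_num) (by positivity)] at this
      have := Real.log_two_lt_d9
      have := le_abs_self (Real.log ‖x‖)
      linarith
    · have : Real.log (1 + ‖x‖) ≤ Real.log 2 :=
        Real.log_le_log (by positivity) (by linarith)
      have := Real.log_two_lt_d9
      linarith
  have hA : 0 < ((1 : ℝ) + ‖x‖ ^ 2) ^ ((1 : ℝ) / 4) := by positivity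
  have hB : 0 < (1 + |Real.log ‖x‖|) ^ α := by positivity
  have hP : 0 < (1 + n) ^ α := by positivity
  have hQ := Real.exp_pos (n / 2)
  rw [Real.rpow_neg (by positivity), neg_div, Real.exp_neg, ← mul_inv, ← div_eq_mul_inv,
    div_le_div_iff₀ (by positivity) (by positivity)]
  have := mul_le_mul e1 e2 hP.le (by positivity)
  nlinarith

lemma cs_tsum (f g : ℕ → ℝ≥0∞) :
    (∑' n, f n * g n) ^ 2 ≤ (∑' n, f n ^ 2) * (∑' n, g n ^ 2) := by
  have h := ENNReal.lintegral_mul_le_Lp_mul_Lq (μ := Measure.count) (p := 2) (q := 2)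
    (Real.holderConjugate_iff.mpr ⟨by norm_num, by norm_num⟩)
    (f := f) (g := g) (measurable_of_countable _).aemeasurable (measurable_of_countable _).aemeasurable
  simp only [lintegral_count, Pi.mul_apply, ENNReal.rpow_two] at h
  calc _ ≤ ((∑' n, f n ^ 2) ^ ((1 : ℝ) / 2) * (∑' n, g n ^ 2) ^ ((1 : ℝ) / 2)) ^ 2 := by gcongr
    _ = _ := by
      rw [mul_pow, ← ENNReal.rpow_two, ← ENNReal.rpow_two, ← ENNReal.rpow_mul, ← ENNReal.rpow_mul]
      norm_num

lemma lintegral_ann (G : E3 → ℝ≥0∞) :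
    ∫⁻ x, G x = ∑' n, ∫⁻ x in annIdx ⁻¹' {n}, G x := by
  rw [← lintegral_iUnion (fun n => annIdx_measurable (measurableSet_singleton n))]
  · rw [← Set.preimage_iUnion, Set.iUnion_of_singleton, Set.preimage_univ, Measure.restrict_univ]
  · intro i j hij
    exact Disjoint.preimage _ (by simpa using hij)

lemma q_sum (α : ℝ) (hα : 1 / 2 < α) :
    ∑' n : ℕ, ENNReal.ofReal ((1 + (n : ℝ)) ^ (-α)) ^ 2 ≠ ∞ := by
  have h1 : Summable (fun n : ℕ => ((n : ℝ)) ^ (-(2 * α))) :=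
    Real.summable_nat_rpow.mpr (by linarith)
  have h2 := (summable_nat_add_iff 1).mpr h1
  have h3 : ∀ n : ℕ, ENNReal.ofReal ((1 + (n : ℝ)) ^ (-α)) ^ 2 =
      ENNReal.ofReal (((n + 1 : ℕ) : ℝ) ^ (-(2 * α))) := by
    intro n
    rw [← ENNReal.ofReal_pow (by positivity), ← Real.rpow_mul_natCast (by positivity)]
    congr 1
    push_cast
    rw [add_comm]
    congr 1
    ring
  simp_rw [h3]
  exact h2.tsum_ofReal_ne_top

/-- General lower bound for the Bopp–Podolsky energy, arbitrary parameter `a`: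
for `a > 0` and `α > 1/2` there is `C = C(a,α) > 0` such that for every measurable `u`,
`V_a(u²,u²) ≥ C (∫ u(x)² / ((1+‖x‖²)^{1/4} (1+|log ‖x‖|)^α) dx)²` in `[0,∞]`. -/
theorem energy_weighted_lower_bound_param (a : ℝ) (ha : 0 < a) (α : ℝ) (hα : 1 / 2 < α) :
    ∃ C : ℝ, 0 < C ∧ ∀ u : E3 → ℝ, Measurable u →
      ENNReal.ofReal C *
        (∫⁻ x, ENNReal.ofReal
          (u x ^ 2 / (((1 : ℝ) + ‖x‖ ^ 2) ^ ((1 : ℝ) / 4) * (1 + |Real.log ‖x‖|) ^ α))) ^ 2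
        ≤ Vlina a (fun x => u x ^ 2) (fun x => u x ^ 2) := by
  set D : ℝ := 2 ^ ((1 : ℝ) / 4) * 2 ^ α with hD
  have hD0 : 0 < D := by positivity
  set q : ℕ → ℝ≥0∞ := fun n => ENNReal.ofReal ((1 + (n : ℝ)) ^ (-α)) with hq
  set p : ℕ → ℝ≥0∞ := fun n => ENNReal.ofReal (Real.exp (-(n : ℝ) / 2)) with hp
  set c : ℝ := 1 / (a + 2 * Real.exp 1) with hc
  have hc0 : 0 < c := by positivity
  have hS : ∑' n, q n ^ 2 ≠ ∞ := q_sum α hα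
  set M' : ℝ≥0∞ := ENNReal.ofReal D ^ 2 * ∑' n, q n ^ 2 with hM'
  have hM : M' ≠ ∞ := ENNReal.mul_ne_top (by simp) hS
  have hM0 : 0 ≤ M'.toReal := ENNReal.toReal_nonneg
  refine ⟨c / (M'.toReal + 1), by positivity, fun u hu => ?_⟩
  have hF : Measurable (fun x => ENNReal.ofReal (u x ^ 2)) := (hu.pow_const 2).ennreal_ofReal
  set m : ℕ → ℝ≥0∞ := fun n => ∫⁻ x in annIdx ⁻¹' {n}, ENNReal.ofReal (u x ^ 2) with hm
  have hms : ∀ n, MeasurableSet (annIdx ⁻¹' {n}) :=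
    fun n => annIdx_measurable (measurableSet_singleton n)
  -- upper bound for the weighted integral
  have up : (∫⁻ x, ENNReal.ofReal
      (u x ^ 2 / (((1 : ℝ) + ‖x‖ ^ 2) ^ ((1 : ℝ) / 4) * (1 + |Real.log ‖x‖|) ^ α)))
      ≤ ENNReal.ofReal D * ∑' n, q n * (p n * m n) := by
    rw [lintegral_ann, ← ENNReal.tsum_mul_left]
    refine ENNReal.tsum_le_tsum fun n => ?_
    have : ENNReal.ofReal D * (q n * (p n * m n)) =
        ∫⁻ x in annIdx ⁻¹' {n}, (ENNReal.ofReal D * (q n * p n)) * ENNReal.ofReal (u x ^ 2) := by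
      rw [lintegral_const_mul _ hF]
      ring
    rw [this]
    refine setLIntegral_mono' (hms n) fun x hx => ?_
    have hx' : annIdx x = n := hx
    have hw := weight_bound α hα x
    rw [hx'] at hw
    rw [hq, hp, ← ENNReal.ofReal_mul (by positivity), ← ENNReal.ofReal_mul (by positivity),
      ← ENNReal.ofReal_mul (by positivity)]
    apply ENNReal.ofReal_le_ofReal
    rw [div_eq_mul_one_div, mul_comm]
    exact mul_le_mul_of_nonneg_right hw (sq_nonneg _)
  -- lower bound for the energy
  have low : ENNReal.ofReal c * ∑' n, (p n * m n) ^ 2 ≤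
      Vlina a (fun x => u x ^ 2) (fun x => u x ^ 2) := by
    unfold Vlina
    rw [lintegral_ann, ← ENNReal.tsum_mul_left]
    refine ENNReal.tsum_le_tsum fun n => ?_
    have : ENNReal.ofReal c * (p n * m n) ^ 2 =
        ∫⁻ x in annIdx ⁻¹' {n}, (ENNReal.ofReal c * p n ^ 2 * m n) * ENNReal.ofReal (u x ^ 2) := by
      rw [lintegral_const_mul _ hF]
      ring
    rw [this]
    refine setLIntegral_mono' (hms n) fun x hx => ?_
    refine le_trans ?_ (setLIntegral_le_lintegral (annIdx ⁻¹' {n}) _)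
    have : ENNReal.ofReal c * p n ^ 2 * m n * ENNReal.ofReal (u x ^ 2) =
        ∫⁻ y in annIdx ⁻¹' {n}, (ENNReal.ofReal c * p n ^ 2 * ENNReal.ofReal (u x ^ 2)) *
          ENNReal.ofReal (u y ^ 2) := by
      rw [lintegral_const_mul _ hF]
      ring
    rw [this]
    refine setLIntegral_mono' (hms n) fun y hy => ?_
    have hk := Ka_block a ha n x y hx hy
    rw [hp, ← ENNReal.ofReal_pow (by positivity), ← ENNReal.ofReal_mul (by positivity),
      ← ENNReal.ofReal_mul (by positivity), ← ENNReal.ofReal_mul (by positivity)]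
    apply ENNReal.ofReal_le_ofReal
    gcongr
  refine le_trans ?_ low
  calc _ ≤ ENNReal.ofReal (c / (M'.toReal + 1)) *
        (ENNReal.ofReal D * ∑' n, q n * (p n * m n)) ^ 2 := by gcongr
    _ ≤ ENNReal.ofReal (c / (M'.toReal + 1)) *
        (ENNReal.ofReal D ^ 2 * ((∑' n, q n ^ 2) * ∑' n, (p n * m n) ^ 2)) := by
      rw [mul_pow]
      gcongr
      exact cs_tsum _ _
    _ = (ENNReal.ofReal (c / (M'.toReal + 1)) * M') * ∑' n, (p n * m n) ^ 2 := by
      rw [hM']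
      ring
    _ ≤ _ := by
      gcongr
      rw [← ENNReal.ofReal_toReal hM, ← ENNReal.ofReal_mul (by positivity),
        ENNReal.toReal_ofReal hM0]
      apply ENNReal.ofReal_le_ofReal
      rw [div_mul_eq_mul_div, div_le_iff₀ (by positivity)]
      nlinarith
end
end

section
/- (Fourth-root triangle inequality for the Bopp–Podolsky energy.) Let K : ℝ³ → ℝ be defined by K(x) = (1 - exp(-‖x‖))/‖x‖ for x ≠ 0 and K(0) = 1, and set V(f,g) = ∫_{ℝ³}∫_{ℝ³} K(x-y) f(x) g(y) dx dy. If u, v : ℝ³ → ℝ are measurable with V(u²,u²) < ∞ and V(v²,v²) < ∞, then V((u+v)², (u+v)²) < ∞ and V((u+v)², (u+v)²)^{1/4} ≤ V(u²,u²)^{1/4} + V(v²,v²)^{1/4}; in other words, u ↦ V(u²,u²)^{1/4} satisfies the triangle inequality. -/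
open MeasureTheory Real
open scoped ENNReal Classical

noncomputable section

/-- Bopp–Podolsky kernel with `a = 1`. -/
def K1 (x : E3) : ℝ := if x = 0 then 1 else (1 - Real.exp (-‖x‖)) / ‖x‖

/-- Laplacian of `f` at `x`: sum of second derivatives along the coordinate directions. -/
def lap (f : E3 → ℝ) (x : E3) : ℝ :=
  ∑ i : Fin 3, fderiv ℝ (fun y => fderiv ℝ f y (EuclideanSpace.single i 1)) x
    (EuclideanSpace.single i 1)

/-- Bopp–Podolsky energy as an iterated lower integral, valued in `[0,∞]`. -/
def Vlin (f g : E3 → ℝ) : ℝ≥0∞ :=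
  ∫⁻ x, ∫⁻ y, ENNReal.ofReal (K1 (x - y) * f x * g y)

/-- Bopp–Podolsky energy as an iterated Bochner integral. -/
def Vr (f g : E3 → ℝ) : ℝ := ∫ x, ∫ y, K1 (x - y) * f x * g y

/-- `G` is the weak gradient of `u`. -/
def IsWeakGradient (u : E3 → ℝ) (G : E3 → E3) : Prop :=
  ∀ φ : E3 → ℝ, ContDiff ℝ (⊤ : ℕ∞) φ → HasCompactSupport φ → ∀ i : Fin 3,
    ∫ x, u x * fderiv ℝ φ x (EuclideanSpace.single i 1) = -∫ x, G x i * φ x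

/-- `h` is the weak Laplacian of `u`. -/
def IsWeakLaplacian (u : E3 → ℝ) (h : E3 → ℝ) : Prop :=
  ∀ φ : E3 → ℝ, ContDiff ℝ (⊤ : ℕ∞) φ → HasCompactSupport φ →
    ∫ x, u x * lap φ x = ∫ x, h x * φ x

lemma glasser (a b : ℝ) (ha : 0 < a) (hb : 0 < b) :
    ∫⁻ p in Set.Ioi (0 : ℝ), ENNReal.ofReal (Real.exp (-(a * p - b / p) ^ 2)) =
      ENNReal.ofReal (√π / (2 * a)) := by
  set w : ℝ → ℝ := fun p => a * p - b / p with hw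
  set g : ℝ → ℝ≥0∞ := fun x => ENNReal.ofReal (Real.exp (-x ^ 2)) with hg
  have hgm : Measurable g := by fun_prop
  have hwm : Measurable w := by fun_prop
  change ∫⁻ p in Set.Ioi (0 : ℝ), g (w p) = _
  have him : w '' Set.Ioi 0 = Set.univ := by
    apply Set.eq_univ_of_forall
    intro y
    have hs : 0 ≤ y ^ 2 + 4 * a * b := by positivity
    have hsq := Real.sq_sqrt hs
    have hpos : 0 < y + √(y ^ 2 + 4 * a * b) := by
      have : |y| < √(y ^ 2 + 4 * a * b) := by
        rw [← Real.sqrt_sq_eq_abs]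
        apply Real.sqrt_lt_sqrt (by positivity)
        have : 0 < 4 * a * b := by positivity
        linarith
      have := neg_abs_le y
      linarith
    refine ⟨(y + √(y ^ 2 + 4 * a * b)) / (2 * a), div_pos hpos (by positivity), ?_⟩
    simp only [hw]
    generalize √(y ^ 2 + 4 * a * b) = s at *
    field_simp
    nlinarith
  have hder : ∀ x ∈ Set.Ioi (0 : ℝ), HasDerivWithinAt w (a + b / x ^ 2) (Set.Ioi 0) x := by
    intro x hx
    have hx0 : x ≠ 0 := ne_of_gt hx
    have h1 : HasDerivAt w (a * 1 - b * (-(x ^ 2)⁻¹)) x :=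
      ((hasDerivAt_id x).const_mul a).sub ((hasDerivAt_inv hx0).const_mul b)
    have e : a + b / x ^ 2 = a * 1 - b * (-(x ^ 2)⁻¹) := by ring
    rw [e]
    exact h1.hasDerivWithinAt
  have hinj : Set.InjOn w (Set.Ioi 0) := by
    intro x hx y hy hxy
    simp only [Set.mem_Ioi] at hx hy
    simp only [hw] at hxy
    have : (x - y) * (a + b / (x * y)) = 0 := by
      have e : (x - y) * (a + b / (x * y)) = (a * x - b / x) - (a * y - b / y) := by
        field_simp; ring
      rw [e, hxy]; ring
    have h2 : a + b / (x * y) ≠ 0 := by positivity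
    have := (mul_eq_zero.1 this).resolve_right h2
    linarith
  have e1 := lintegral_image_eq_lintegral_abs_deriv_mul measurableSet_Ioi hder hinj g
  have hgauss : ∫⁻ x, g x = ENNReal.ofReal (√π) := by
    have h := ofReal_integral_eq_lintegral_ofReal
      (integrable_exp_neg_mul_sq (b := 1) one_pos)
      (Filter.Eventually.of_forall fun x => (Real.exp_pos _).le)
    rw [integral_gaussian] at h
    simpa [hg] using h.symm
  rw [him, Measure.restrict_univ, hgauss] at e1
  have hder2 : ∀ x ∈ Set.Ioi (0 : ℝ), HasDerivWithinAt (fun p => b / (a * p))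
      (-(b / (a * x ^ 2))) (Set.Ioi 0) x := by
    intro x hx
    have hx0 : x ≠ 0 := ne_of_gt hx
    have h1 : HasDerivAt (fun p : ℝ => (b / a) * p⁻¹) ((b / a) * (-(x ^ 2)⁻¹)) x :=
      (hasDerivAt_inv hx0).const_mul (b / a)
    have h2 : (fun p : ℝ => b / (a * p)) = fun p : ℝ => (b / a) * p⁻¹ := by
      funext p; rw [div_mul_eq_div_div]; rfl
    rw [h2]
    have e : -(b / (a * x ^ 2)) = (b / a) * (-(x ^ 2)⁻¹) := by field_simp
    rw [e]
    exact h1.hasDerivWithinAt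
  have hinj2 : Set.InjOn (fun p : ℝ => b / (a * p)) (Set.Ioi 0) := by
    intro x hx y hy hxy
    simp only [Set.mem_Ioi] at hx hy
    simp only at hxy
    field_simp at hxy
    exact hxy.symm
  have him2 : (fun p : ℝ => b / (a * p)) '' Set.Ioi 0 = Set.Ioi 0 := by
    ext y
    constructor
    · rintro ⟨x, hx, rfl⟩
      simp only [Set.mem_Ioi] at hx ⊢
      positivity
    · intro hy
      simp only [Set.mem_Ioi] at hy
      refine ⟨b / (a * y), ?_, ?_⟩
      · simp only [Set.mem_Ioi]; positivity
      · field_simp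
  have e2 := lintegral_image_eq_lintegral_abs_deriv_mul measurableSet_Ioi hder2 hinj2
    (fun p => g (w p))
  rw [him2] at e2
  have e3 : ENNReal.ofReal a * ∫⁻ p in Set.Ioi (0 : ℝ), g (w p) =
      ∫⁻ p in Set.Ioi (0 : ℝ), ENNReal.ofReal (b / p ^ 2) * g (w p) := by
    rw [e2, ← lintegral_const_mul' _ _ ENNReal.ofReal_ne_top]
    apply setLIntegral_congr_fun measurableSet_Ioi
    intro x hx
    simp only [Set.mem_Ioi] at hx
    simp only
    rw [← mul_assoc, ← ENNReal.ofReal_mul ha.le, abs_neg, abs_of_pos (by positivity)]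
    congr 1
    · congr 1; field_simp
    · simp only [hg, hw]
      congr 2
      field_simp
      ring
  have e4 : ENNReal.ofReal (√π) = ENNReal.ofReal (2 * a) *
      ∫⁻ p in Set.Ioi (0 : ℝ), g (w p) := by
    rw [e1, two_mul, ENNReal.ofReal_add ha.le ha.le, add_mul]
    nth_rewrite 2 [e3]
    rw [← lintegral_const_mul' _ _ ENNReal.ofReal_ne_top, ← lintegral_add_left (by fun_prop)]
    apply setLIntegral_congr_fun measurableSet_Ioi
    intro x hx
    simp only [Set.mem_Ioi] at hx
    simp only
    rw [abs_of_pos (by positivity), ENNReal.ofReal_add ha.le (by positivity), add_mul]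
  rw [ENNReal.ofReal_div_of_pos (by positivity), e4, mul_comm]
  rw [ENNReal.mul_div_cancel_right]
  · simpa using ha
  · exact ENNReal.ofReal_ne_top

lemma kernel_q (r : ℝ) (hr : 0 < r) :
    ∫⁻ q in Set.Ioi (0 : ℝ), ENNReal.ofReal
      ((1 - Real.exp (-(1 / (4 * q ^ 2)))) * Real.exp (-(q ^ 2 * r ^ 2))) =
    ENNReal.ofReal (√π / 2 * ((1 - Real.exp (-r)) / r)) := by
  have hB : ∫⁻ q in Set.Ioi (0 : ℝ), ENNReal.ofReal
      (Real.exp (-(1 / (4 * q ^ 2))) * Real.exp (-(q ^ 2 * r ^ 2))) =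
      ENNReal.ofReal (Real.exp (-r) * (√π / (2 * r))) := by
    rw [ENNReal.ofReal_mul (Real.exp_pos _).le, ← glasser r (1 / 2) hr (by norm_num),
      ← lintegral_const_mul' _ _ ENNReal.ofReal_ne_top]
    apply setLIntegral_congr_fun measurableSet_Ioi
    intro x hx
    simp only [Set.mem_Ioi] at hx
    simp only
    rw [← ENNReal.ofReal_mul (Real.exp_pos _).le, ← Real.exp_add, ← Real.exp_add]
    congr 2
    field_simp
    ring
  have hC : ∫⁻ q in Set.Ioi (0 : ℝ), ENNReal.ofReal (Real.exp (-(q ^ 2 * r ^ 2))) =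
      ENNReal.ofReal (√π / (2 * r)) := by
    have h := ofReal_integral_eq_lintegral_ofReal
      (integrable_exp_neg_mul_sq (b := r ^ 2) (by positivity)).integrableOn
      (μ := volume.restrict (Set.Ioi (0 : ℝ)))
      (Filter.Eventually.of_forall fun x => (Real.exp_pos _).le)
    rw [integral_gaussian_Ioi, Real.sqrt_div Real.pi_pos.le, Real.sqrt_sq hr.le] at h
    rw [show √π / (2 * r) = √π / r / 2 by field_simp, h]
    congr 1
    funext q
    congr 2
    ring
  have hsum : (∫⁻ q in Set.Ioi (0 : ℝ), ENNReal.ofReal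
      ((1 - Real.exp (-(1 / (4 * q ^ 2)))) * Real.exp (-(q ^ 2 * r ^ 2)))) +
      ENNReal.ofReal (Real.exp (-r) * (√π / (2 * r))) = ENNReal.ofReal (√π / (2 * r)) := by
    rw [← hB, ← hC, ← lintegral_add_left (by fun_prop)]
    apply lintegral_congr
    intro q
    rw [← ENNReal.ofReal_add]
    · congr 1; ring
    · apply mul_nonneg _ (Real.exp_pos _).le
      rw [sub_nonneg, Real.exp_le_one_iff, neg_nonpos]
      positivity
    · positivity
  have he : Real.exp (-r) ≤ 1 := by
    rw [Real.exp_le_one_iff]; linarith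
  rw [← ENNReal.add_left_inj (a := ENNReal.ofReal (Real.exp (-r) * (√π / (2 * r))))
    ENNReal.ofReal_ne_top, hsum, ← ENNReal.ofReal_add]
  · congr 1; field_simp; ring
  · have := sub_nonneg.2 he
    positivity
  · positivity

lemma gauss_conv (q : ℝ) (hq : 0 < q) (x y : E3) :
    ∫⁻ z : E3, ENNReal.ofReal (Real.exp (-(2 * q ^ 2 * ‖x - z‖ ^ 2))) *
      ENNReal.ofReal (Real.exp (-(2 * q ^ 2 * ‖y - z‖ ^ 2))) =
    ENNReal.ofReal ((π / (4 * q ^ 2)) ^ (3 / 2 : ℝ)) *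
      ENNReal.ofReal (Real.exp (-(q ^ 2 * ‖x - y‖ ^ 2))) := by
  have hb : 0 < 4 * q ^ 2 := by positivity
  have hI := GaussianFourier.integral_rexp_neg_mul_sq_norm (V := E3) hb
  have hpos : 0 < (π / (4 * q ^ 2)) ^ (3 / 2 : ℝ) := by positivity
  have hfr : ((Module.finrank ℝ E3 : ℝ)) = 3 := by simp [E3]
  rw [hfr] at hI
  have hint : Integrable (fun v : E3 => Real.exp (-(4 * q ^ 2) * ‖v‖ ^ 2)) := by
    by_contra h
    rw [integral_undef h] at hI
    linarith
  have hL := ofReal_integral_eq_lintegral_ofReal hint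
    (Filter.Eventually.of_forall fun x => (Real.exp_pos _).le)
  rw [hI] at hL
  rw [hL, ← lintegral_add_right_eq_self
    (fun v : E3 => ENNReal.ofReal (Real.exp (-(4 * q ^ 2) * ‖v‖ ^ 2))) (-((1 / 2 : ℝ) • (x + y))),
    mul_comm (lintegral _ _), ← lintegral_const_mul' _ _ ENNReal.ofReal_ne_top]
  apply lintegral_congr
  intro z
  rw [← ENNReal.ofReal_mul (Real.exp_pos _).le, ← ENNReal.ofReal_mul (Real.exp_pos _).le,
    ← Real.exp_add, ← Real.exp_add]
  congr 2
  have h := parallelogram_law_with_norm ℝ (x - z) (y - z)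
  have e1 : (x - z) + (y - z) = (-2 : ℝ) • (z + -((1 / 2 : ℝ) • (x + y))) := by module
  have e2 : (x - z) - (y - z) = x - y := by module
  rw [e1, e2, norm_smul] at h
  norm_num at h
  rw [mul_pow] at h
  norm_num
  linear_combination (q ^ 2) * h

def wt (q : ℝ) : ℝ := 2 / √π * (1 - Real.exp (-(1 / (4 * q ^ 2)))) *
  ((π / (4 * q ^ 2)) ^ (3 / 2 : ℝ))⁻¹

def ph (m : ℝ × E3) (x : E3) : ℝ≥0∞ :=
  ENNReal.ofReal (Real.exp (-(2 * m.1 ^ 2 * ‖x - m.2‖ ^ 2)))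

def mu : Measure (ℝ × E3) := (volume.restrict (Set.Ioi (0 : ℝ))).prod volume

instance : SFinite mu := by unfold mu; infer_instance

lemma wt_meas : Measurable wt := by unfold wt; fun_prop

lemma ph_meas : Measurable (Function.uncurry ph) := by
  unfold ph Function.uncurry; fun_prop

lemma ph_measx (m : ℝ × E3) : Measurable (ph m) := by
  unfold ph; fun_prop

lemma ph_swap : Measurable fun p : E3 × (ℝ × E3) => ph p.2 p.1 := by
  unfold ph; fun_prop

lemma ph_snd (x : E3) : Measurable fun p : E3 × (ℝ × E3) => ph p.2 x := by
  unfold ph; fun_prop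

lemma kernel_rep (x y : E3) (hxy : x ≠ y) :
    ENNReal.ofReal (K1 (x - y)) =
      ∫⁻ m, ENNReal.ofReal (wt m.1) * (ph m x * ph m y) ∂mu := by
  have hne : x - y ≠ 0 := sub_ne_zero.2 hxy
  have hr : 0 < ‖x - y‖ := norm_pos_iff.2 hne
  have hm : Measurable fun m : ℝ × E3 => ENNReal.ofReal (wt m.1) * (ph m x * ph m y) := by
    have := wt_meas
    unfold ph
    fun_prop
  unfold mu
  rw [lintegral_prod _ hm.aemeasurable, K1, if_neg hne]
  have hk := kernel_q ‖x - y‖ hr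
  have e : (1 - Real.exp (-‖x - y‖)) / ‖x - y‖ =
      2 / √π * (√π / 2 * ((1 - Real.exp (-‖x - y‖)) / ‖x - y‖)) := by
    have : 0 < √π := Real.sqrt_pos.2 Real.pi_pos
    field_simp
  rw [e, ENNReal.ofReal_mul (by positivity), ← hk,
    ← lintegral_const_mul' _ _ ENNReal.ofReal_ne_top]
  apply setLIntegral_congr_fun measurableSet_Ioi
  intro q hq
  simp only [Set.mem_Ioi] at hq
  simp only [ph]
  rw [lintegral_const_mul' _ _ ENNReal.ofReal_ne_top, gauss_conv q hq]
  have h1 : 0 ≤ 1 - Real.exp (-(1 / (4 * q ^ 2))) := by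
    rw [sub_nonneg, Real.exp_le_one_iff, neg_nonpos]
    positivity
  have h2 : 0 < (π / (4 * q ^ 2)) ^ (3 / 2 : ℝ) := by positivity
  rw [← ENNReal.ofReal_mul (by positivity), ← ENNReal.ofReal_mul (by positivity),
    ← ENNReal.ofReal_mul (by unfold wt; positivity)]
  congr 1
  unfold wt
  field_simp

lemma K1_nonneg (x : E3) : 0 ≤ K1 x := by
  unfold K1
  split_ifs
  · exact zero_le_one
  · apply div_nonneg _ (norm_nonneg _)
    rw [sub_nonneg, Real.exp_le_one_iff, neg_nonpos]
    positivity

lemma K1_meas : Measurable K1 := by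
  unfold K1
  apply Measurable.ite (measurableSet_singleton 0) <;> fun_prop

/-- weighted L² square -/
def A2 (f : E3 → ℝ) (m : ℝ × E3) : ℝ≥0∞ := ∫⁻ x, ph m x * ENNReal.ofReal (f x ^ 2)

lemma A2_meas (f : E3 → ℝ) (hf : Measurable f) : Measurable (A2 f) := by
  unfold A2
  apply Measurable.lintegral_prod_right' (f := fun p : (ℝ × E3) × E3 =>
    ph p.1 p.2 * ENNReal.ofReal (f p.2 ^ 2))
  have := ph_meas
  unfold Function.uncurry at this
  fun_prop

lemma Vlin_eq (f : E3 → ℝ) (hf : Measurable f) :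
    Vlin (fun x => f x ^ 2) (fun x => f x ^ 2) =
      ∫⁻ m, ENNReal.ofReal (wt m.1) * (A2 f m) ^ 2 ∂mu := by
  have hwt := wt_meas
  have hphx : ∀ m, Measurable (ph m) := ph_measx
  set F : E3 → ℝ≥0∞ := fun x => ENNReal.ofReal (f x ^ 2) with hF
  have hFm : Measurable F := by fun_prop
  have step1 : ∀ x, ∫⁻ y, ENNReal.ofReal (K1 (x - y) * f x ^ 2 * f y ^ 2) =
      ∫⁻ m, ENNReal.ofReal (wt m.1) * (ph m x * F x) * A2 f m ∂mu := by
    intro x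
    have hae : ∀ᵐ y : E3, ENNReal.ofReal (K1 (x - y) * f x ^ 2 * f y ^ 2) =
        ∫⁻ m, ENNReal.ofReal (wt m.1) * (ph m x * F x) * (ph m y * F y) ∂mu := by
      have hn : ∀ᵐ y : E3, y ≠ x := by
        simp [ae_iff]
      filter_upwards [hn] with y hy
      rw [ENNReal.ofReal_mul (mul_nonneg (K1_nonneg _) (sq_nonneg _)),
        ENNReal.ofReal_mul (K1_nonneg _), kernel_rep x y hy.symm,
        mul_assoc, ← lintegral_mul_const' _ _ (by finiteness)]
      apply lintegral_congr
      intro m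
      simp only [hF]
      ring
    rw [lintegral_congr_ae hae, lintegral_lintegral_swap]
    · apply lintegral_congr
      intro m
      rw [lintegral_const_mul]
      · rfl
      · exact (hphx m).mul hFm
    · apply Measurable.aemeasurable
      unfold Function.uncurry
      have h1 : Measurable fun p : E3 × (ℝ × E3) => ph p.2 p.1 := ph_swap
      have h2 : Measurable fun p : E3 × (ℝ × E3) => ph p.2 x := ph_snd x
      fun_prop
  unfold Vlin
  simp only [step1]
  rw [lintegral_lintegral_swap]
  · apply lintegral_congr
    intro m
    have : ∀ x, ENNReal.ofReal (wt m.1) * (ph m x * F x) * A2 f m =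
      (ENNReal.ofReal (wt m.1) * A2 f m) * (ph m x * F x) := fun x => by ring
    simp only [this]
    have hmm : Measurable fun x => ph m x * F x := (hphx m).mul hFm
    rw [lintegral_const_mul _ hmm]
    change _ * A2 f m = _
    ring
  · apply Measurable.aemeasurable
    unfold Function.uncurry
    have h1 : Measurable fun p : E3 × (ℝ × E3) => ph p.2 p.1 := ph_swap
    have h2 := A2_meas f hf
    fun_prop

lemma Vr_eq (f : E3 → ℝ) (hf : Measurable f)
    (hV : Vlin (fun x => f x ^ 2) (fun x => f x ^ 2) < ⊤) :
    Vr (fun x => f x ^ 2) (fun x => f x ^ 2) =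
      (Vlin (fun x => f x ^ 2) (fun x => f x ^ 2)).toReal := by
  have hK := K1_meas
  have hm : Measurable fun p : E3 × E3 => K1 (p.1 - p.2) * f p.1 ^ 2 * f p.2 ^ 2 := by fun_prop
  have hm2 : Measurable fun x => ∫⁻ y, ENNReal.ofReal (K1 (x - y) * f x ^ 2 * f y ^ 2) :=
    Measurable.lintegral_prod_right' (f := fun p : E3 × E3 =>
      ENNReal.ofReal (K1 (p.1 - p.2) * f p.1 ^ 2 * f p.2 ^ 2)) (by fun_prop)
  unfold Vr Vlin at *
  rw [← integral_toReal hm2.aemeasurable (ae_lt_top hm2 hV.ne)]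
  congr 1
  funext x
  rw [integral_eq_lintegral_of_nonneg_ae]
  · refine Filter.Eventually.of_forall fun y => ?_
    exact mul_nonneg (mul_nonneg (K1_nonneg _) (sq_nonneg _)) (sq_nonneg _)
  · exact (hm.comp measurable_prodMk_left).aestronglyMeasurable

lemma A2_tri (u v : E3 → ℝ) (hu : Measurable u) (hv : Measurable v) (m : ℝ × E3) :
    (A2 (fun x => u x + v x) m) ^ (1 / 2 : ℝ) ≤
      (A2 u m) ^ (1 / 2 : ℝ) + (A2 v m) ^ (1 / 2 : ℝ) := by
  have hphx : Measurable (ph m) := ph_measx m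
  have key : ∀ f : E3 → ℝ, Measurable f →
      A2 f m = ∫⁻ x, (ENNReal.ofReal |f x|) ^ (2 : ℝ) ∂(volume.withDensity (ph m)) := by
    intro f hf
    rw [lintegral_withDensity_eq_lintegral_mul _ hphx (by fun_prop)]
    apply lintegral_congr
    intro x
    simp only [Pi.mul_apply]
    rw [← sq_abs, ENNReal.ofReal_pow (abs_nonneg _)]
    norm_cast
  rw [key u hu, key v hv, key (fun x => u x + v x) (hu.add hv)]
  refine le_trans ?_ (ENNReal.lintegral_Lp_add_le (p := 2) (by fun_prop) (by fun_prop)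
    (by norm_num))
  gcongr with x
  simp only [Pi.add_apply]
  rw [← ENNReal.ofReal_add (abs_nonneg _) (abs_nonneg _)]
  exact ENNReal.ofReal_le_ofReal (abs_add_le _ _)

lemma Vlin_tri (u v : E3 → ℝ) (hu : Measurable u) (hv : Measurable v) :
    (Vlin (fun x => (u x + v x) ^ 2) (fun x => (u x + v x) ^ 2)) ^ ((1 : ℝ) / 4) ≤
      (Vlin (fun x => u x ^ 2) (fun x => u x ^ 2)) ^ ((1 : ℝ) / 4) +
      (Vlin (fun x => v x ^ 2) (fun x => v x ^ 2)) ^ ((1 : ℝ) / 4) := by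
  have hwt := wt_meas
  have key : ∀ f : E3 → ℝ, Measurable f →
      Vlin (fun x => f x ^ 2) (fun x => f x ^ 2) = ∫⁻ m, ((A2 f m) ^ (1 / 2 : ℝ)) ^ (4 : ℝ)
        ∂(mu.withDensity fun m => ENNReal.ofReal (wt m.1)) := by
    intro f hf
    have := A2_meas f hf
    rw [lintegral_withDensity_eq_lintegral_mul _ (by fun_prop) (by fun_prop), Vlin_eq f hf]
    apply lintegral_congr
    intro m
    simp only [Pi.mul_apply]
    rw [← ENNReal.rpow_mul]
    norm_num
  rw [key u hu, key v hv, key (fun x => u x + v x) (hu.add hv)]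
  have h1 := A2_meas u hu
  have h2 := A2_meas v hv
  refine le_trans ?_ (ENNReal.lintegral_Lp_add_le (p := 4) (by fun_prop) (by fun_prop)
    (by norm_num))
  gcongr with m
  exact A2_tri u v hu hv m

/-- Fourth-root triangle inequality for the Bopp–Podolsky energy:
if `V(u²,u²) < ∞` and `V(v²,v²) < ∞`, then `V((u+v)²,(u+v)²) < ∞` and
`V((u+v)²,(u+v)²)^{1/4} ≤ V(u²,u²)^{1/4} + V(v²,v²)^{1/4}`. -/
theorem energy_fourth_root_triangle (u v : E3 → ℝ) (hu : Measurable u) (hv : Measurable v)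
    (hVu : Vlin (fun x => u x ^ 2) (fun x => u x ^ 2) < ⊤)
    (hVv : Vlin (fun x => v x ^ 2) (fun x => v x ^ 2) < ⊤) :
    Vlin (fun x => (u x + v x) ^ 2) (fun x => (u x + v x) ^ 2) < ⊤ ∧
    (Vr (fun x => (u x + v x) ^ 2) (fun x => (u x + v x) ^ 2)) ^ ((1 : ℝ) / 4) ≤
      (Vr (fun x => u x ^ 2) (fun x => u x ^ 2)) ^ ((1 : ℝ) / 4) +
      (Vr (fun x => v x ^ 2) (fun x => v x ^ 2)) ^ ((1 : ℝ) / 4) := by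
  have htri := Vlin_tri u v hu hv
  have hfin : Vlin (fun x => (u x + v x) ^ 2) (fun x => (u x + v x) ^ 2) < ⊤ := by
    by_contra h
    rw [not_lt_top_iff.1 h, ENNReal.top_rpow_of_pos (by norm_num), top_le_iff] at htri
    refine absurd htri ?_
    finiteness
  refine ⟨hfin, ?_⟩
  rw [Vr_eq u hu hVu, Vr_eq v hv hVv, Vr_eq (fun x => u x + v x) (hu.add hv) hfin,
    ENNReal.toReal_rpow, ENNReal.toReal_rpow, ENNReal.toReal_rpow,
    ← ENNReal.toReal_add (by finiteness) (by finiteness)]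
  exact ENNReal.toReal_mono (by finiteness) htri
end
end
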